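/- arXiv:2603.29388 — 3 statements merged into one kernel-verified Lean document; each statement's English description precedes it below -/
import Mathlib

section
/- Master residual identity for the exponential-of-quadratic-form ansatz. Let f: ℝⁿ → ℝⁿ be smooth, Σ₀ constant diagonal with nonnegative entries, F: ℝⁿ × ℝ → ℝⁿ twice continuously differentiable in x and once in t, and Q: ℝ → ℝⁿˣⁿ differentiable with each Q(t) symmetric. Then the function p(x,t) = exp(−F(x,t)ᵀ Q(t) F(x,t)) satisfies, at every (x,t), ∂p/∂t + ∇·(f p) − (1/2) Tr(Σ₀ ∇²p) = [ −2 Fᵀ Q (∂F/∂t + J_F f) − Fᵀ (dQ/dt) F + (∇·f) − 2 Fᵀ Q J_F Σ₀ J_Fᵀ Q F + Tr(Σ₀ J_Fᵀ Q J_F) + Fᵀ Q Δ ] · p. -/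
open Matrix Real

/-- The divergence of a vector field `v : ℝⁿ → ℝⁿ` at `x`: `∑ i, ∂vᵢ/∂xᵢ (x)`. -/
noncomputable def divg {n : ℕ} (v : (Fin n → ℝ) → (Fin n → ℝ)) (x : Fin n → ℝ) : ℝ :=
  ∑ i, fderiv ℝ v x (Pi.single i 1) i

/-- The Jacobian matrix of a map `F : ℝⁿ → ℝⁿ` at `x`: `(J_F)ᵢⱼ = ∂Fᵢ/∂xⱼ (x)`. -/
noncomputable def jac {n : ℕ} (F : (Fin n → ℝ) → (Fin n → ℝ)) (x : Fin n → ℝ) :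
    Matrix (Fin n) (Fin n) ℝ :=
  Matrix.of fun i j => fderiv ℝ F x (Pi.single j 1) i

/-- The Hessian matrix of a scalar function `g : ℝⁿ → ℝ` at `x`:
`(∇²g)ᵢⱼ = ∂²g/∂xᵢ∂xⱼ (x)`. -/
noncomputable def hess {n : ℕ} (g : (Fin n → ℝ) → ℝ) (x : Fin n → ℝ) :
    Matrix (Fin n) (Fin n) ℝ :=
  Matrix.of fun i j => fderiv ℝ (fun y => fderiv ℝ g y (Pi.single j 1)) x (Pi.single i 1)

/-!
Writing a positive density as `p = exp g` linearises the time derivative and the divergence and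
turns the Hessian into `∇²p = (∇²g + ∇g ∇gᵀ) p`, so the Fokker–Planck residual of `exp g` is
`(∂g/∂t + ∇·f + ∇g·f − (1/2) (∇gᵀ Σ₀ ∇g + Tr(Σ₀ ∇²g))) p` for any diffusion matrix `Σ₀`.
For `g = −FᵀQF` with `Q` symmetric one has `∇g = −2 J_Fᵀ Q F` and
`∇²g = −2 (J_Fᵀ Q J_F + ∑ₖ (QF)ₖ ∇²Fₖ)`, and the last sum, traced against `Σ₀`, is `FᵀQΔ`.
-/

open scoped Topology

/-- The gradient of a scalar function `g : ℝⁿ → ℝ` at `x`, as the vector of its partial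
derivatives. Mathlib's `gradient` requires an inner product space, which `Fin n → ℝ` is not. -/
noncomputable def grad {n : ℕ} (g : (Fin n → ℝ) → ℝ) (x : Fin n → ℝ) : Fin n → ℝ :=
  fun i => fderiv ℝ g x (Pi.single i 1)

/-- The Fokker–Planck residual `∂p/∂t + ∇·(f p) − (1/2) Tr(S ∇²p)` at `(x, t)` for the drift `f`
and the constant diffusion matrix `S`; a density solves the equation where it vanishes. -/
noncomputable def fokkerPlanckResidual {n : ℕ} (S : Matrix (Fin n) (Fin n) ℝ)
    (f : (Fin n → ℝ) → (Fin n → ℝ)) (p : ℝ → (Fin n → ℝ) → ℝ) (x : Fin n → ℝ) (t : ℝ) : ℝ :=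
  deriv (fun s => p s x) t + divg (fun y => p t y • f y) x
    - (1 / 2 : ℝ) * trace (S * hess (p t) x)

section SecondOrder

variable {𝕜 E V : Type*} [NontriviallyNormedField 𝕜] [NormedAddCommGroup E] [NormedSpace 𝕜 E]
  [NormedAddCommGroup V] [NormedSpace 𝕜 V] {g : E → V} {x : E}

lemma eventually_differentiableAt_of_contDiffAt_two (hg : ContDiffAt 𝕜 2 g x) :
    ∀ᶠ y in 𝓝 x, DifferentiableAt 𝕜 g y :=
  (hg.eventually (by simp)).mono fun _ hy => hy.differentiableAt two_ne_zero

lemma differentiableAt_fderiv_apply_const (hg : ContDiffAt 𝕜 2 g x) (v : E) :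
    DifferentiableAt 𝕜 (fun y => fderiv 𝕜 g y v) x :=
  ((hg.fderiv_right one_add_one_eq_two.le).differentiableAt one_ne_zero).clm_apply
    (differentiableAt_const v)

end SecondOrder

section DotProduct

variable {𝕜 ι κ E : Type*} [NontriviallyNormedField 𝕜] [CompleteSpace 𝕜] [Fintype ι]
  [Fintype κ] [NormedAddCommGroup E] [NormedSpace 𝕜 E] {u : E → κ → 𝕜} {w : E → ι → 𝕜} {x : E}

lemma contDiffAt_dotProduct_mulVec {m : WithTop ℕ∞} (M : Matrix κ ι 𝕜) (hu : ContDiffAt 𝕜 m u x)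
    (hw : ContDiffAt 𝕜 m w x) : ContDiffAt 𝕜 m (fun y => u y ⬝ᵥ M *ᵥ w y) x := by
  classical
  simpa [toLinearMap₂'_apply', Function.comp_def] using
    (toLinearMap₂' 𝕜 M).toContinuousBilinearMap.isBoundedBilinearMap.contDiff.comp_contDiffAt x
      (hu.prodMk hw)

lemma fderiv_dotProduct_mulVec_apply (M : Matrix κ ι 𝕜) (hu : DifferentiableAt 𝕜 u x)
    (hw : DifferentiableAt 𝕜 w x) (v : E) :
    fderiv 𝕜 (fun y => u y ⬝ᵥ M *ᵥ w y) x v =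
      fderiv 𝕜 u x v ⬝ᵥ M *ᵥ w x + u x ⬝ᵥ M *ᵥ fderiv 𝕜 w x v := by
  classical
  have h := (toLinearMap₂' 𝕜 M).toContinuousBilinearMap.fderiv_of_bilinear hu hw
  simpa [toLinearMap₂'_apply', add_comm] using DFunLike.congr_fun h v

end DotProduct

section TimeDerivative

variable {𝕜 ι : Type*} [NontriviallyNormedField 𝕜] [Fintype ι]

lemma hasDerivAt_dotProduct {u w : 𝕜 → ι → 𝕜} {u' w' : ι → 𝕜} {t : 𝕜} (hu : HasDerivAt u u' t)
    (hw : HasDerivAt w w' t) :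
    HasDerivAt (fun s => u s ⬝ᵥ w s) (u' ⬝ᵥ w t + u t ⬝ᵥ w') t :=
  (HasDerivAt.fun_sum fun i _ => (hasDerivAt_pi.1 hu i).fun_mul (hasDerivAt_pi.1 hw i)).congr_deriv
    Finset.sum_add_distrib

lemma hasDerivAt_mulVec {κ : Type*} [Finite κ] {A : 𝕜 → Matrix κ ι 𝕜} {A' : Matrix κ ι 𝕜}
    {u : 𝕜 → ι → 𝕜} {u' : ι → 𝕜} {t : 𝕜} (hA : ∀ i j, HasDerivAt (fun s => A s i j) (A' i j) t)
    (hu : HasDerivAt u u' t) :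
    HasDerivAt (fun s => A s *ᵥ u s) (A' *ᵥ u t + A t *ᵥ u') t :=
  have := Fintype.ofFinite κ
  hasDerivAt_pi.2 fun i => hasDerivAt_dotProduct (hasDerivAt_pi.2 (hA i)) hu

end TimeDerivative

section QuadraticForm

variable {𝕜 ι : Type*} [NontriviallyNormedField 𝕜] [Fintype ι]

lemma dotProduct_mulVec_comm_of_isSymm {R : Type*} [CommSemiring R] {M : Matrix ι ι R}
    (hM : M.IsSymm) (a b : ι → R) : a ⬝ᵥ M *ᵥ b = b ⬝ᵥ M *ᵥ a := by
  rw [← dotProduct_transpose_mulVec, hM.eq]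

lemma hasDerivAt_quadraticForm {Q : 𝕜 → Matrix ι ι 𝕜} {Q' : Matrix ι ι 𝕜} {u : 𝕜 → ι → 𝕜}
    {u' : ι → 𝕜} {t : 𝕜} (hQ : ∀ i j, HasDerivAt (fun s => Q s i j) (Q' i j) t)
    (hQsymm : (Q t).IsSymm) (hu : HasDerivAt u u' t) :
    HasDerivAt (fun s => u s ⬝ᵥ Q s *ᵥ u s)
      (2 * (u t ⬝ᵥ Q t *ᵥ u') + u t ⬝ᵥ Q' *ᵥ u t) t := by
  refine (hasDerivAt_dotProduct hu (hasDerivAt_mulVec hQ hu)).congr_deriv ?_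
  rw [dotProduct_add, dotProduct_mulVec_comm_of_isSymm hQsymm u']
  ring

variable {E : Type*} [CompleteSpace 𝕜] [NormedAddCommGroup E] [NormedSpace 𝕜 E]
  {M : Matrix ι ι 𝕜} {G : E → ι → 𝕜} {x : E}

lemma fderiv_quadraticForm_apply (hM : M.IsSymm) (hG : DifferentiableAt 𝕜 G x) (v : E) :
    fderiv 𝕜 (fun y => G y ⬝ᵥ M *ᵥ G y) x v = 2 * (fderiv 𝕜 G x v ⬝ᵥ M *ᵥ G x) := by
  rw [fderiv_dotProduct_mulVec_apply M hG hG, dotProduct_mulVec_comm_of_isSymm hM (G x), two_mul]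

lemma fderiv_fderiv_quadraticForm_apply (hM : M.IsSymm) (hG : ContDiffAt 𝕜 2 G x) (v w : E) :
    fderiv 𝕜 (fun y => fderiv 𝕜 (fun z => G z ⬝ᵥ M *ᵥ G z) y v) x w =
      2 * (fderiv 𝕜 (fun y => fderiv 𝕜 G y v) x w ⬝ᵥ M *ᵥ G x
        + fderiv 𝕜 G x v ⬝ᵥ M *ᵥ fderiv 𝕜 G x w) := by
  have hgrad : (fun y => fderiv 𝕜 (fun z => G z ⬝ᵥ M *ᵥ G z) y v) =ᶠ[𝓝 x]
      (2 : 𝕜) • fun y => fderiv 𝕜 G y v ⬝ᵥ M *ᵥ G y :=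
    (eventually_differentiableAt_of_contDiffAt_two hG).mono fun y hy =>
      fderiv_quadraticForm_apply hM hy v
  rw [hgrad.fderiv_eq, fderiv_const_smul_field]
  exact congrArg (2 * ·) (fderiv_dotProduct_mulVec_apply M
    (differentiableAt_fderiv_apply_const hG v) (hG.differentiableAt two_ne_zero) w)

end QuadraticForm

section VectorCalculus

variable {n : ℕ} {x : Fin n → ℝ}

lemma divg_smul {φ : (Fin n → ℝ) → ℝ} {f : (Fin n → ℝ) → (Fin n → ℝ)}
    (hφ : DifferentiableAt ℝ φ x) (hf : DifferentiableAt ℝ f x) :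
    divg (fun y => φ y • f y) x = φ x * divg f x + grad φ x ⬝ᵥ f x := by
  simp [divg, grad, dotProduct, fderiv_fun_smul hφ hf, Finset.sum_add_distrib, Finset.mul_sum]

lemma grad_neg (g : (Fin n → ℝ) → ℝ) (x : Fin n → ℝ) :
    grad (fun y => -g y) x = -grad g x := by
  ext i
  simp [grad, fderiv_fun_neg]

lemma hess_neg (g : (Fin n → ℝ) → ℝ) (x : Fin n → ℝ) :
    hess (fun y => -g y) x = -hess g x := by
  ext i j
  simp [hess, fderiv_fun_neg]

lemma grad_exp {g : (Fin n → ℝ) → ℝ} (hg : DifferentiableAt ℝ g x) :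
    grad (fun y => Real.exp (g y)) x = Real.exp (g x) • grad g x := by
  ext i
  simp [grad, fderiv_exp hg]

lemma hess_exp {g : (Fin n → ℝ) → ℝ} (hg : ContDiffAt ℝ 2 g x) :
    hess (fun y => Real.exp (g y)) x =
      Real.exp (g x) • (hess g x + vecMulVec (grad g x) (grad g x)) := by
  ext i j
  have hdiff := hg.differentiableAt two_ne_zero
  have hgrad : (fun y => fderiv ℝ (fun z => Real.exp (g z)) y (Pi.single j 1)) =ᶠ[𝓝 x]
      fun y => Real.exp (g y) * fderiv ℝ g y (Pi.single j 1) :=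
    (eventually_differentiableAt_of_contDiffAt_two hg).mono fun y hy =>
      congrFun (grad_exp hy) j
  simp only [hess, of_apply, hgrad.fderiv_eq]
  rw [fderiv_fun_mul hdiff.exp (differentiableAt_fderiv_apply_const hg _), fderiv_exp hdiff]
  simp only [_root_.add_apply, _root_.smul_apply, smul_eq_mul, Matrix.smul_apply, Matrix.add_apply,
    of_apply, vecMulVec_apply, grad]
  ring

variable {G : (Fin n → ℝ) → (Fin n → ℝ)} {M : Matrix (Fin n) (Fin n) ℝ}

lemma fderiv_fderiv_apply_eq_hess (hG : ContDiffAt ℝ 2 G x) (i j k : Fin n) :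
    fderiv ℝ (fun y => fderiv ℝ G y (Pi.single j 1)) x (Pi.single i 1) k =
      hess (fun y => G y k) x i j := by
  have hcomp : (fun y => fderiv ℝ (fun z => G z k) y (Pi.single j 1)) =ᶠ[𝓝 x]
      fun y => fderiv ℝ G y (Pi.single j 1) k :=
    (eventually_differentiableAt_of_contDiffAt_two hG).mono fun y hy =>
      DFunLike.congr_fun (fderiv_apply hy k) _
  rw [hess, of_apply, hcomp.fderiv_eq, fderiv_apply (differentiableAt_fderiv_apply_const hG _)]
  rfl

lemma grad_quadraticForm (hM : M.IsSymm) (hG : DifferentiableAt ℝ G x) :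
    grad (fun y => G y ⬝ᵥ M *ᵥ G y) x = (2 : ℝ) • ((jac G x)ᵀ *ᵥ (M *ᵥ G x)) :=
  funext fun i => fderiv_quadraticForm_apply hM hG (Pi.single i 1)

lemma hess_quadraticForm (hM : M.IsSymm) (hG : ContDiffAt ℝ 2 G x) :
    hess (fun y => G y ⬝ᵥ M *ᵥ G y) x =
      (2 : ℝ) • ((jac G x)ᵀ * M * jac G x
        + ∑ k, (M *ᵥ G x) k • hess (fun y => G y k) x) := by
  ext i j
  have hfirst : ((jac G x)ᵀ * M * jac G x) i j =
      fderiv ℝ G x (Pi.single j 1) ⬝ᵥ M *ᵥ fderiv ℝ G x (Pi.single i 1) := by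
    rw [dotProduct_mulVec_comm_of_isSymm hM, Matrix.mul_assoc]
    rfl
  have hsecond : fderiv ℝ (fun y => fderiv ℝ G y (Pi.single j 1)) x (Pi.single i 1) ⬝ᵥ M *ᵥ G x =
      (∑ k, (M *ᵥ G x) k • hess (fun y => G y k) x) i j := by
    simp [dotProduct, Matrix.sum_apply, fderiv_fderiv_apply_eq_hess hG, mul_comm]
  rw [hess, of_apply, fderiv_fderiv_quadraticForm_apply hM hG, hsecond, ← hfirst, add_comm]
  rfl

lemma trace_mul_hess_quadraticForm (hM : M.IsSymm) (hG : ContDiffAt ℝ 2 G x)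
    (S : Matrix (Fin n) (Fin n) ℝ) :
    trace (S * hess (fun y => G y ⬝ᵥ M *ᵥ G y) x) =
      2 * (trace (S * ((jac G x)ᵀ * M * jac G x))
        + G x ⬝ᵥ M *ᵥ fun k => trace (S * hess (fun y => G y k) x)) := by
  rw [hess_quadraticForm hM hG, dotProduct_mulVec_comm_of_isSymm hM]
  simp [Matrix.mul_sum, trace_sum, dotProduct, mul_comm, mul_add]

end VectorCalculus

section FokkerPlanck

variable {n : ℕ} {f : (Fin n → ℝ) → (Fin n → ℝ)} {x : Fin n → ℝ} {t : ℝ}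

theorem fokkerPlanckResidual_exp (S : Matrix (Fin n) (Fin n) ℝ) (hf : DifferentiableAt ℝ f x)
    {g : ℝ → (Fin n → ℝ) → ℝ} {g' : ℝ} (hgt : HasDerivAt (fun s => g s x) g' t)
    (hgx : ContDiffAt ℝ 2 (g t) x) :
    fokkerPlanckResidual S f (fun s y => Real.exp (g s y)) x t =
      (g' + divg f x + grad (g t) x ⬝ᵥ f x
        - (1 / 2) * (grad (g t) x ⬝ᵥ S *ᵥ grad (g t) x + trace (S * hess (g t) x)))
        * Real.exp (g t x) := by
  have hdiff := hgx.differentiableAt two_ne_zero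
  rw [fokkerPlanckResidual, hgt.exp.deriv, divg_smul hdiff.exp hf, grad_exp hdiff, hess_exp hgx,
    Matrix.mul_smul, trace_smul, Matrix.mul_add, trace_add, mul_vecMulVec, trace_vecMulVec,
    dotProduct_comm (S *ᵥ _), smul_dotProduct, smul_eq_mul, smul_eq_mul]
  ring

theorem master_residual_identity_general (S : Matrix (Fin n) (Fin n) ℝ)
    (hf : DifferentiableAt ℝ f x) {F : ℝ → (Fin n → ℝ) → (Fin n → ℝ)} {Ft : Fin n → ℝ}
    (hFx : ContDiffAt ℝ 2 (F t) x) (hFt : HasDerivAt (fun s => F s x) Ft t)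
    {Q : ℝ → Matrix (Fin n) (Fin n) ℝ} {Q' : Matrix (Fin n) (Fin n) ℝ}
    (hQ : ∀ i j, HasDerivAt (fun s => Q s i j) (Q' i j) t) (hQsymm : (Q t).IsSymm)
    {Δ : Fin n → ℝ} (hΔ : ∀ k, Δ k = trace (S * hess (fun y => F t y k) x)) :
    fokkerPlanckResidual S f (fun s y => Real.exp (-(F s y ⬝ᵥ Q s *ᵥ F s y))) x t =
      (-(2 * (F t x ⬝ᵥ Q t *ᵥ (Ft + jac (F t) x *ᵥ f x)))
          - F t x ⬝ᵥ Q' *ᵥ F t x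
          + divg f x
          - 2 * (F t x ⬝ᵥ Q t *ᵥ (jac (F t) x *ᵥ (S *ᵥ ((jac (F t) x)ᵀ *ᵥ (Q t *ᵥ F t x)))))
          + trace (S * ((jac (F t) x)ᵀ * Q t * jac (F t) x))
          + F t x ⬝ᵥ Q t *ᵥ Δ)
        * Real.exp (-(F t x ⬝ᵥ Q t *ᵥ F t x)) := by
  have hquad := contDiffAt_dotProduct_mulVec (Q t) hFx hFx
  have hadjoint (v : Fin n → ℝ) :
      ((jac (F t) x)ᵀ *ᵥ (Q t *ᵥ F t x)) ⬝ᵥ v = F t x ⬝ᵥ Q t *ᵥ (jac (F t) x *ᵥ v) := by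
    rw [dotProduct_comm, dotProduct_transpose_mulVec, dotProduct_comm,
      dotProduct_mulVec_comm_of_isSymm hQsymm]
  rw [fokkerPlanckResidual_exp S hf (hasDerivAt_quadraticForm hQ hQsymm hFt).fun_neg hquad.neg,
    grad_neg, hess_neg, grad_quadraticForm hQsymm (hFx.differentiableAt two_ne_zero),
    Matrix.mul_neg, trace_neg, trace_mul_hess_quadraticForm hQsymm hFx, funext hΔ]
  simp only [neg_dotProduct, dotProduct_neg, mulVec_neg, smul_dotProduct, dotProduct_smul,
    mulVec_smul, smul_eq_mul, hadjoint, mulVec_add, dotProduct_add]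
  ring

end FokkerPlanck

/-- **Master residual identity for the exponential-of-quadratic-form ansatz.**
With drift `f` smooth, `Σ₀ = diag σ` constant diagonal with nonnegative entries,
`F(·,t)` twice continuously differentiable in `x` and differentiable in `t` with time
derivative `Ft`, and `Q(t)` symmetric differentiable with derivative `Q'`, the function
`p(x,t) = exp(−F(x,t)ᵀ Q(t) F(x,t))` satisfies, at every `(x,t)`,
`∂p/∂t + ∇·(f p) − (1/2) Tr(Σ₀ ∇²p)
  = [−2 FᵀQ(∂F/∂t + J_F f) − Fᵀ(dQ/dt)F + (∇·f) − 2 FᵀQ J_F Σ₀ J_Fᵀ Q F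
     + Tr(Σ₀ J_FᵀQJ_F) + FᵀQΔ] p`. -/
theorem master_residual_identity {n : ℕ}
    (f : (Fin n → ℝ) → (Fin n → ℝ)) (hf : ContDiff ℝ (⊤ : ℕ∞) f)
    (σ : Fin n → ℝ) (hσ : ∀ j, 0 ≤ σ j)
    (F Ft : ℝ → (Fin n → ℝ) → (Fin n → ℝ))
    (hFx : ∀ t : ℝ, ContDiff ℝ 2 (F t))
    (hFt : ∀ (x : Fin n → ℝ) (t : ℝ), HasDerivAt (fun s => F s x) (Ft t x) t)
    (Q Q' : ℝ → Matrix (Fin n) (Fin n) ℝ)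
    (hQ : ∀ (i j : Fin n) (t : ℝ), HasDerivAt (fun s => Q s i j) (Q' t i j) t)
    (hQsymm : ∀ t : ℝ, (Q t).IsSymm)
    (Δ : ℝ → (Fin n → ℝ) → (Fin n → ℝ))
    (hΔ : ∀ t x k, Δ t x k = ∑ j, σ j *
      fderiv ℝ (fun y => fderiv ℝ (fun z => F t z k) y (Pi.single j 1)) x (Pi.single j 1)) :
    ∀ (x : Fin n → ℝ) (t : ℝ),
      deriv (fun s => Real.exp (-(F s x ⬝ᵥ Q s *ᵥ F s x))) t
        + divg (fun y => Real.exp (-(F t y ⬝ᵥ Q t *ᵥ F t y)) • f y) x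
        - (1 / 2 : ℝ) * Matrix.trace (Matrix.diagonal σ
            * hess (fun y => Real.exp (-(F t y ⬝ᵥ Q t *ᵥ F t y))) x)
      = (-(2 * (F t x ⬝ᵥ Q t *ᵥ (Ft t x + jac (F t) x *ᵥ f x)))
          - F t x ⬝ᵥ Q' t *ᵥ F t x
          + divg f x
          - 2 * (F t x ⬝ᵥ Q t *ᵥ (jac (F t) x *ᵥ (Matrix.diagonal σ *ᵥ ((jac (F t) x)ᵀ *ᵥ (Q t *ᵥ F t x)))))
          + Matrix.trace (Matrix.diagonal σ * ((jac (F t) x)ᵀ * Q t * jac (F t) x))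
          + F t x ⬝ᵥ Q t *ᵥ Δ t x)
        * Real.exp (-(F t x ⬝ᵥ Q t *ᵥ F t x)) := by
  intro x t
  refine master_residual_identity_general (diagonal σ) (hf.differentiable (by simp) x)
    (hFx t).contDiffAt (hFt x t) (fun i j => hQ i j t) (hQsymm t) fun k => ?_
  simp [hΔ, trace, diagonal_mul, hess]
end

section
/- Reduction of the Taylor Diffusion framework to classical covariance propagation for linear dynamics. Let A ∈ ℝⁿˣⁿ, Σ₀ ∈ ℝⁿˣⁿ symmetric positive semidefinite, and Q ∈ ℝⁿˣⁿ a constant symmetric positive definite matrix. Suppose Φ: ℝ → ℝⁿˣⁿ is differentiable with Φ(t) invertible for all t and satisfies dΦ/dt = −Φ A − Φ Σ₀ Φᵀ Q Φ (the evolution of the linear map F(x,t) = Φ(t)(x − x₀(t)) prescribed by the framework's map equation for drift f(x) = A x). Then P(t) := (1/2)(Φ(t)ᵀ Q Φ(t))⁻¹ is differentiable and satisfies the Lyapunov differential equation dP/dt = A P + P Aᵀ + Σ₀. -/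
open Matrix Real

/-!
The precision `M = Φᵀ Q Φ` satisfies the Riccati equation `M' = -Aᵀ M - M A - 2 M Σ₀ M`: by the
symmetry of `Q` and `Σ₀`, the two diffusion terms of the product rule coincide. Since
`(M⁻¹)' = -M⁻¹ M' M⁻¹`, inversion makes the quadratic term constant, which leaves the linear
Lyapunov equation for `P = M⁻¹ / 2`.
-/

variable {𝕜 : Type*} [NontriviallyNormedField 𝕜]

section MatrixCalculus

variable {l m n : Type*} {t : 𝕜}

theorem hasDerivAt_matrix_iff [Finite m] [Finite n] {E : Type*} [NormedAddCommGroup E]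
    [NormedSpace 𝕜 E] {F : 𝕜 → Matrix m n E} {F' : Matrix m n E} :
    HasDerivAt F F' t ↔ ∀ i j, HasDerivAt (fun s => F s i j) (F' i j) t := by
  cases nonempty_fintype m
  cases nonempty_fintype n
  exact hasDerivAt_pi.trans <| forall_congr' fun _ => hasDerivAt_pi

theorem hasDerivAt_matrix_const_smul [Finite m] [Finite n] {E : Type*} [NormedAddCommGroup E]
    [NormedSpace 𝕜 E] {F : 𝕜 → Matrix m n E} {F' : Matrix m n E} (c : 𝕜) (hF : HasDerivAt F F' t) :
    HasDerivAt (fun s => c • F s) (c • F') t :=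
  hasDerivAt_matrix_iff.2 fun i j => (hasDerivAt_matrix_iff.1 hF i j).fun_const_smul c

theorem hasDerivAt_matrix_transpose [Finite m] [Finite n] {E : Type*} [NormedAddCommGroup E]
    [NormedSpace 𝕜 E] {F : 𝕜 → Matrix m n E} {F' : Matrix m n E} (hF : HasDerivAt F F' t) :
    HasDerivAt (fun s => (F s)ᵀ) F'ᵀ t :=
  hasDerivAt_matrix_iff.2 fun i j => hasDerivAt_matrix_iff.1 hF j i

theorem hasDerivAt_matrix_mul [Finite l] [Fintype m] [Finite n] {R : Type*} [NormedRing R]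
    [NormedAlgebra 𝕜 R] {F : 𝕜 → Matrix l m R} {F' : Matrix l m R} {G : 𝕜 → Matrix m n R}
    {G' : Matrix m n R} (hF : HasDerivAt F F' t) (hG : HasDerivAt G G' t) :
    HasDerivAt (fun s => F s * G s) (F' * G t + F t * G') t := by
  rw [hasDerivAt_matrix_iff] at hF hG ⊢
  intro i j
  simp only [Matrix.add_apply, mul_apply, ← Finset.sum_add_distrib]
  exact HasDerivAt.fun_sum fun k _ => (hF i k).fun_mul (hG k j)

theorem hasDerivAt_matrix_mul_const [Finite l] [Fintype m] [Finite n] {R : Type*} [NormedRing R]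
    [NormedAlgebra 𝕜 R] {F : 𝕜 → Matrix l m R} {F' : Matrix l m R} (hF : HasDerivAt F F' t)
    (C : Matrix m n R) : HasDerivAt (fun s => F s * C) (F' * C) t :=
  hasDerivAt_matrix_iff.2 fun i j =>
    HasDerivAt.fun_sum fun k _ => (hasDerivAt_matrix_iff.1 hF i k).mul_const (C k j)

theorem hasDerivAt_ringInverse {R : Type*} [NormedRing R] [NormedAlgebra 𝕜 R]
    [HasSummableGeomSeries R] {f : 𝕜 → R} {f' : R} (hf : HasDerivAt f f' t) (hunit : IsUnit (f t)) :
    HasDerivAt (fun s => Ring.inverse (f s))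
      (-(Ring.inverse (f t) * f' * Ring.inverse (f t))) t := by
  obtain ⟨u, hu⟩ := hunit
  have hinv : HasFDerivAt Ring.inverse _ (f t) := hu ▸ hasFDerivAt_ringInverse (𝕜 := 𝕜) u
  simpa [← hu] using! hinv.comp_hasDerivAt t hf

theorem hasDerivAt_matrix_inv [CompleteSpace 𝕜] [Fintype n] [DecidableEq n]
    {F : 𝕜 → Matrix n n 𝕜} {F' : Matrix n n 𝕜} (hF : HasDerivAt F F' t)
    (hdet : IsUnit (F t).det) :
    HasDerivAt (fun s => (F s)⁻¹) (-((F t)⁻¹ * F' * (F t)⁻¹)) t := by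
  simp only [nonsing_inv_eq_ringInverse]
  open scoped Matrix.Norms.Operator in
  -- The uniformity of the operator norm is the entrywise one, but instance search cannot see it.
  have : @CompleteSpace (Matrix n n 𝕜) PseudoMetricSpace.toUniformSpace :=
    Matrix.instCompleteSpace n n 𝕜
  exact hasDerivAt_ringInverse hF ((isUnit_iff_isUnit_det _).2 hdet)

end MatrixCalculus

section CovariancePropagation

variable {m n : Type*} [Fintype m] [Fintype n] {t : 𝕜}

theorem hasDerivAt_smul_inv_lyapunov_of_riccati [CompleteSpace 𝕜] [DecidableEq n]
    {M : 𝕜 → Matrix n n 𝕜} {A B S : Matrix n n 𝕜} {c : 𝕜} (hc : c ≠ 0) (hdet : IsUnit (M t).det)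
    (hM : HasDerivAt M (-(B * M t) - M t * A - c • (M t * S * M t)) t) :
    HasDerivAt (fun s => c⁻¹ • (M s)⁻¹) (A * (c⁻¹ • (M t)⁻¹) + (c⁻¹ • (M t)⁻¹) * B + S) t := by
  have conj_riccati : (M t)⁻¹ * (-(B * M t) - M t * A - c • (M t * S * M t)) * (M t)⁻¹ =
      -((M t)⁻¹ * B) - A * (M t)⁻¹ - c • S := by
    simp only [Matrix.mul_sub, Matrix.sub_mul, Matrix.mul_neg, Matrix.neg_mul, Matrix.mul_smul,
      Matrix.smul_mul, Matrix.mul_assoc, mul_nonsing_inv _ hdet,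
      nonsing_inv_mul_cancel_left _ _ hdet, Matrix.mul_one]
  have hinv := hasDerivAt_matrix_const_smul c⁻¹ (hasDerivAt_matrix_inv hM hdet)
  rw [conj_riccati] at hinv
  convert hinv using 1
  rw [Matrix.mul_smul, Matrix.smul_mul]
  match_scalars <;> field_simp

theorem hasDerivAt_transpose_mul_mul_riccati {Φ : 𝕜 → Matrix m n 𝕜} {A S : Matrix n n 𝕜}
    {Q : Matrix m m 𝕜} (hS : S.IsSymm) (hQ : Q.IsSymm)
    (hΦ : HasDerivAt Φ (-(Φ t * A) - Φ t * S * (Φ t)ᵀ * Q * Φ t) t) :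
    HasDerivAt (fun s => (Φ s)ᵀ * Q * Φ s)
      (-(Aᵀ * ((Φ t)ᵀ * Q * Φ t)) - (Φ t)ᵀ * Q * Φ t * A -
        (2 : 𝕜) • ((Φ t)ᵀ * Q * Φ t * S * ((Φ t)ᵀ * Q * Φ t))) t := by
  have hΦT := hasDerivAt_matrix_transpose hΦ
  have hΦTQ := hasDerivAt_matrix_mul_const hΦT Q
  have product_rule := hasDerivAt_matrix_mul hΦTQ hΦ
  have riccati : (-(Φ t * A) - Φ t * S * (Φ t)ᵀ * Q * Φ t)ᵀ * Q * Φ t +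
        (Φ t)ᵀ * Q * (-(Φ t * A) - Φ t * S * (Φ t)ᵀ * Q * Φ t) =
      -(Aᵀ * ((Φ t)ᵀ * Q * Φ t)) - (Φ t)ᵀ * Q * Φ t * A -
        (2 : 𝕜) • ((Φ t)ᵀ * Q * Φ t * S * ((Φ t)ᵀ * Q * Φ t)) := by
    simp only [transpose_sub, transpose_neg, transpose_mul, transpose_transpose, hS.eq, hQ.eq,
      Matrix.sub_mul, Matrix.mul_sub, Matrix.neg_mul, Matrix.mul_neg, Matrix.mul_assoc]
    module
  rwa [riccati] at product_rule

theorem taylor_diffusion_reduces_to_covariance_propagation_general [CompleteSpace 𝕜]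
    [NeZero (2 : 𝕜)] [DecidableEq n] {A Sigma0 : Matrix n n 𝕜} {Q : Matrix m m 𝕜}
    (hSigma0 : Sigma0.IsSymm) (hQ : Q.IsSymm) {Φ : 𝕜 → Matrix m n 𝕜}
    (hdet : IsUnit ((Φ t)ᵀ * Q * Φ t).det)
    (hΦode : HasDerivAt Φ (-(Φ t * A) - Φ t * Sigma0 * (Φ t)ᵀ * Q * Φ t) t)
    {P : 𝕜 → Matrix n n 𝕜} (hP : ∀ s, P s = (1 / 2 : 𝕜) • ((Φ s)ᵀ * Q * Φ s)⁻¹) :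
    HasDerivAt P (A * P t + P t * Aᵀ + Sigma0) t := by
  obtain rfl : P = fun s => (2 : 𝕜)⁻¹ • ((Φ s)ᵀ * Q * Φ s)⁻¹ := by
    simpa only [one_div] using funext hP
  exact hasDerivAt_smul_inv_lyapunov_of_riccati two_ne_zero hdet
    (hasDerivAt_transpose_mul_mul_riccati hSigma0 hQ hΦode)

end CovariancePropagation

theorem isUnit_det_transpose_mul_mul {n R : Type*} [Fintype n] [DecidableEq n] [CommRing R]
    {Φ Q : Matrix n n R} (hΦ : IsUnit Φ.det) (hQ : IsUnit Q.det) : IsUnit (Φᵀ * Q * Φ).det := by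
  rw [det_mul, det_mul, det_transpose]
  exact (hΦ.mul hQ).mul hΦ

/-- **Reduction of the Taylor Diffusion framework to classical covariance propagation
for linear dynamics.**
If `Φ(t)` is invertible, differentiable, and satisfies
`dΦ/dt = −Φ A − Φ Σ₀ Φᵀ Q Φ` (the framework's map evolution for the linear map
`F(x,t) = Φ(t)(x − x₀(t))` and drift `f(x) = A x`), then
`P(t) = (1/2)(Φ(t)ᵀ Q Φ(t))⁻¹` is differentiable and satisfies the Lyapunov
differential equation `dP/dt = A P + P Aᵀ + Σ₀`. -/
theorem taylor_diffusion_reduces_to_covariance_propagation {n : ℕ}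
    (A : Matrix (Fin n) (Fin n) ℝ)
    (Sigma0 : Matrix (Fin n) (Fin n) ℝ) (hSigma0 : Sigma0.PosSemidef)
    (Q : Matrix (Fin n) (Fin n) ℝ) (hQ : Q.PosDef)
    (Φ : ℝ → Matrix (Fin n) (Fin n) ℝ)
    (hΦinv : ∀ t : ℝ, IsUnit (Φ t).det)
    (hΦode : ∀ (t : ℝ) (i j : Fin n),
      HasDerivAt (fun s => Φ s i j)
        ((-(Φ t * A) - Φ t * Sigma0 * (Φ t)ᵀ * Q * Φ t) i j) t)
    (P : ℝ → Matrix (Fin n) (Fin n) ℝ)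
    (hP : ∀ t : ℝ, P t = (1 / 2 : ℝ) • ((Φ t)ᵀ * Q * Φ t)⁻¹) :
    ∀ (t : ℝ) (i j : Fin n),
      HasDerivAt (fun s => P s i j) ((A * P t + P t * Aᵀ + Sigma0) i j) t := by
  exact fun t => hasDerivAt_matrix_iff.1 <|
    taylor_diffusion_reduces_to_covariance_propagation_general
      (isHermitian_iff_isSymm.1 hSigma0.isHermitian) (isHermitian_iff_isSymm.1 hQ.isHermitian)
      (isUnit_det_transpose_mul_mul (hΦinv t) hQ.det_pos.ne'.isUnit)
      (hasDerivAt_matrix_iff.2 (hΦode t)) hP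
end

section
/- Preservation of positive semidefiniteness under the precision-matrix dynamics. Let M_i: [0,∞) → ℝⁿˣⁿ, i = 1,…,m, be continuous matrix-valued functions and let Q: [0,∞) → ℝⁿˣⁿ be continuously differentiable and satisfy dQ/dt(t) = (1/2) Σ_{i=1}^m M_i(t)ᵀ Q(t) M_i(t) for all t ≥ 0. If Q(0) is symmetric positive semidefinite, then Q(t) is symmetric positive semidefinite for every t ≥ 0. -/
open Matrix Real

/-!
Let `δ t` be the distance from `Q t` to the closed cone of nonnegative elements. Conjugation maps
the cone to itself, so an Euler step `q ↦ q + h • ((1/2) • ∑ i, (M i t)ᵀ * q * M i t)` does too, and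
it is Lipschitz with constant `1 + h * K`, where `K` bounds `∑ i, ‖M i t‖ ^ 2`. Hence
`δ (t + h) ≤ (1 + h * K) * δ t + o(h)`, and Grönwall's inequality with `δ 0 = 0` forces `δ = 0`.
The distance is taken in the space of all matrices, not only the symmetric ones, so this also yields
the symmetry of `Q t`.
-/

open Set Filter Metric
open scoped NNReal Topology

section Invariance

theorem infDist_le_mul_infDist_of_mapsTo {X Y : Type*} [PseudoMetricSpace X] [PseudoMetricSpace Y]
    {f : X → Y} {K : ℝ≥0} {s : Set X} {t : Set Y} (hf : LipschitzWith K f) (hst : MapsTo f s t)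
    (hs : s.Nonempty) (x : X) : infDist (f x) t ≤ K * infDist x s := by
  have := hs.to_subtype
  rw [infDist_eq_iInf (x := x), Real.mul_iInf_of_nonneg K.coe_nonneg]
  exact le_ciInf fun y ↦ (infDist_le_dist_of_mem (hst y.2)).trans (hf.dist_le_mul x y)

variable {E : Type*} [NormedAddCommGroup E] [NormedSpace ℝ E] {s : Set E} {K : ℝ≥0}

theorem infDist_add_smul_le_of_mapsTo {F : E → E} {h : ℝ} (hF : LipschitzWith K F) (hh : 0 ≤ h)
    (hs : s.Nonempty) (hmaps : MapsTo (fun p ↦ p + h • F p) s s) (x : E) :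
    infDist (x + h • F x) s ≤ (1 + h * K) * infDist x s := by
  lift h to ℝ≥0 using hh
  have hlip : LipschitzWith (1 + h * K) fun p ↦ p + (h : ℝ) • F p := by
    simpa using LipschitzWith.id.add ((lipschitzWith_smul (h : ℝ)).comp hF)
  exact_mod_cast infDist_le_mul_infDist_of_mapsTo hlip hmaps hs x

theorem frequently_slope_infDist_lt {F : E → E} {f : ℝ → E} {t r : ℝ} (hF : LipschitzWith K F)
    (hs : s.Nonempty) (hmaps : ∃ᶠ h in 𝓝[>] (0 : ℝ), MapsTo (fun p ↦ p + h • F p) s s)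
    (hf : HasDerivWithinAt f (F (f t)) (Ici t) t) (hr : K * infDist (f t) s < r) :
    ∃ᶠ z in 𝓝[>] t, (z - t)⁻¹ * (infDist (f z) s - infDist (f t) s) < r := by
  have hslope : ∀ᶠ z in 𝓝[>] t, dist (slope f t z) (F (f t)) < r - K * infDist (f t) s :=
    tendsto_nhds.1 (hasDerivWithinAt_iff_tendsto_slope' self_notMem_Ioi |>.1 hf.Ioi_of_Ici) _
      (sub_pos.2 hr)
  have hmaps' : ∃ᶠ z in 𝓝[>] t, MapsTo (fun p ↦ p + (z - t) • F p) s s := by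
    have hshift : map (t + ·) (𝓝[>] 0) = 𝓝[>] t := by rw [map_add_left_nhdsGT, add_zero]
    rw [← hshift, frequently_map]
    simpa only [add_sub_cancel_left] using hmaps
  refine (hmaps'.and_eventually (hslope.and self_mem_nhdsWithin)).mono ?_
  rintro z ⟨hz_maps, hz_slope, hz : t < z⟩
  have hpos : 0 < z - t := sub_pos.2 hz
  have hstep : dist (f z) (f t + (z - t) • F (f t)) = (z - t) * dist (slope f t z) (F (f t)) := by
    have hfz : f z = f t + (z - t) • slope f t z := by simp [sub_smul_slope]
    calc dist (f z) (f t + (z - t) • F (f t))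
        = dist (f t + (z - t) • slope f t z) (f t + (z - t) • F (f t)) := by rw [← hfz]
      _ = (z - t) * dist (slope f t z) (F (f t)) := by
        rw [dist_add_left, dist_smul₀, Real.norm_of_nonneg hpos.le]
  have hle : infDist (f z) s ≤
      (1 + (z - t) * K) * infDist (f t) s + (z - t) * dist (slope f t z) (F (f t)) :=
    hstep ▸ infDist_le_infDist_add_dist.trans
      (by gcongr; exact infDist_add_smul_le_of_mapsTo hF hpos.le hs hz_maps _)
  rw [inv_mul_lt_iff₀ hpos]
  calc infDist (f z) s - infDist (f t) s
      ≤ (z - t) * (K * infDist (f t) s + dist (slope f t z) (F (f t))) := by linarith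
    _ < (z - t) * r := by gcongr; linarith

theorem mem_of_hasDerivWithinAt_of_mapsTo_add_smul {v : ℝ → E → E} {f : ℝ → E} {a b : ℝ}
    (hs : IsClosed s) (hv : ∀ t ∈ Ico a b, LipschitzWith K (v t))
    (hmaps : ∀ t ∈ Ico a b, ∃ᶠ h in 𝓝[>] (0 : ℝ), MapsTo (fun p ↦ p + h • v t p) s s)
    (hf : ContinuousOn f (Icc a b))
    (hf' : ∀ t ∈ Ico a b, HasDerivWithinAt f (v t (f t)) (Ici t) t) (ha : f a ∈ s) :
    ∀ t ∈ Icc a b, f t ∈ s := by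
  intro t ht
  have hne : s.Nonempty := ⟨f a, ha⟩
  have hdist : infDist (f t) s ≤ gronwallBound 0 K 0 (t - a) :=
    le_gronwallBound_of_liminf_deriv_right_le ((continuous_infDist_pt s).comp_continuousOn hf)
      (fun x hx r hr ↦ frequently_slope_infDist_lt (hv x hx) hne (hmaps x hx) (hf' x hx) hr)
      (infDist_zero_of_mem ha).le (fun x _ ↦ (add_zero _).ge) t ht
  rw [gronwallBound_ε0_δ0] at hdist
  exact (hs.mem_iff_infDist_zero hne).2 (hdist.antisymm infDist_nonneg)

end Invariance

section StarOrdered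

variable {A ι : Type*} [NonUnitalNormedRing A] [StarRing A] [NormedStarGroup A] [Fintype ι]

theorem lipschitzWith_sum_star_mul_mul {M : ι → A} {C : ι → ℝ≥0} (hM : ∀ i, ‖M i‖₊ ≤ C i) :
    LipschitzWith (∑ i, C i ^ 2) fun q ↦ ∑ i, star (M i) * q * M i := by
  refine LipschitzWith.of_dist_le_mul fun p q ↦ ?_
  simp only [dist_eq_norm, ← Finset.sum_sub_distrib, ← sub_mul, ← mul_sub, NNReal.coe_sum,
    NNReal.coe_pow, Finset.sum_mul]
  refine norm_sum_le_of_le _ fun i _ ↦ ?_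
  have hMi : ‖M i‖ ≤ C i := hM i
  calc ‖star (M i) * (p - q) * M i‖ ≤ ‖star (M i)‖ * ‖p - q‖ * ‖M i‖ := norm_mul₃_le
    _ = ‖M i‖ ^ 2 * ‖p - q‖ := by rw [norm_star]; ring
    _ ≤ C i ^ 2 * ‖p - q‖ := by gcongr

theorem precision_dynamics_preserves_posSemidef_general [PartialOrder A] [StarOrderedRing A]
    [ClosedIciTopology A] [NormedSpace ℝ A] [PosSMulMono ℝ A] {M : ι → ℝ → A} {Q : ℝ → A} {a b : ℝ}
    (hM : ∀ i, BddAbove ((fun t ↦ ‖M i t‖₊) '' Ico a b)) (hQ : ContinuousOn Q (Icc a b))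
    (hQderiv : ∀ t ∈ Ico a b,
      HasDerivWithinAt Q ((1 / 2 : ℝ) • ∑ i, star (M i t) * Q t * M i t) (Ici t) t)
    (ha : 0 ≤ Q a) : ∀ t ∈ Icc a b, 0 ≤ Q t := by
  choose C hC using hM
  refine mem_of_hasDerivWithinAt_of_mapsTo_add_smul (s := Ici 0)
    (v := fun t q ↦ (1 / 2 : ℝ) • ∑ i, star (M i t) * q * M i t) isClosed_Ici
    (fun t ht ↦ (lipschitzWith_smul (1 / 2 : ℝ)).comp
      (lipschitzWith_sum_star_mul_mul fun i ↦ hC i (mem_image_of_mem _ ht)))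
    (fun t _ ↦ Eventually.frequently ?_) hQ hQderiv ha
  filter_upwards [self_mem_nhdsWithin] with h (hh : 0 < h) q (hq : 0 ≤ q)
  have hconj : 0 ≤ ∑ i, star (M i t) * q * M i t :=
    Finset.sum_nonneg fun i _ ↦ star_left_conjugate_nonneg hq (M i t)
  exact add_nonneg hq (smul_nonneg hh.le (smul_nonneg one_half_pos.le hconj))

end StarOrdered

section Matrix

theorem isClosed_setOf_posSemidef {n R : Type*} [Ring R] [PartialOrder R] [StarRing R]
    [TopologicalSpace R] [IsTopologicalRing R] [ContinuousStar R] [T2Space R]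
    [ClosedIciTopology R] : IsClosed {A : Matrix n n R | A.PosSemidef} := by
  simp only [Matrix.PosSemidef, ofPred_and, ofPred_forall, Finsupp.sum]
  refine (isClosed_eq (by fun_prop) (by fun_prop)).inter (isClosed_iInter fun x ↦ ?_)
  exact isClosed_Ici.preimage (by fun_prop)

open scoped MatrixOrder ComplexOrder in
instance instClosedIciTopologyMatrix {n 𝕜 : Type*} [RCLike 𝕜] :
    ClosedIciTopology (Matrix n n 𝕜) where
  isClosed_Ici _ := isClosed_setOf_posSemidef.preimage (continuous_id.sub continuous_const)

end Matrix

/-- **Preservation of positive semidefiniteness under the precision-matrix dynamics.**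
Let `M i : [0,∞) → ℝⁿˣⁿ`, `i = 1,…,m`, be continuous and let `Q : [0,∞) → ℝⁿˣⁿ` be
continuously differentiable with `dQ/dt = (1/2) ∑ᵢ Mᵢᵀ Q Mᵢ` on `[0,∞)`.
If `Q(0)` is symmetric positive semidefinite, then so is `Q(t)` for every `t ≥ 0`. -/
theorem precision_dynamics_preserves_posSemidef {n m : ℕ}
    (M : Fin m → ℝ → Matrix (Fin n) (Fin n) ℝ)
    (hM : ∀ i, ContinuousOn (M i) (Set.Ici (0 : ℝ)))
    (Q : ℝ → Matrix (Fin n) (Fin n) ℝ)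
    (Q' : ℝ → Matrix (Fin n) (Fin n) ℝ)
    (hQderiv : ∀ t ∈ Set.Ici (0 : ℝ), ∀ i j : Fin n,
      HasDerivWithinAt (fun s => Q s i j) (Q' t i j) (Set.Ici (0 : ℝ)) t)
    (hQ'cont : ∀ i j : Fin n, ContinuousOn (fun t => Q' t i j) (Set.Ici (0 : ℝ)))
    (hode : ∀ t ∈ Set.Ici (0 : ℝ),
      Q' t = (1 / 2 : ℝ) • ∑ i : Fin m, (M i t)ᵀ * Q t * M i t)
    (h0 : (Q 0).PosSemidef) :
    ∀ t : ℝ, 0 ≤ t → (Q t).PosSemidef := by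
  intro T hT
  have hQ (t : ℝ) (ht : 0 ≤ t) : HasDerivWithinAt Q (Q' t) (Ici 0) t :=
    hasDerivWithinAt_pi.2 fun i ↦ hasDerivWithinAt_pi.2 (hQderiv t ht i)
  open scoped Matrix.Norms.L2Operator MatrixOrder in
  exact Matrix.nonneg_iff_posSemidef.1 <|
    precision_dynamics_preserves_posSemidef_general
      (fun i ↦ (isCompact_Icc.bddAbove_image ((hM i).mono Icc_subset_Ici_self).nnnorm).mono
        (image_mono Ico_subset_Icc_self))
      (fun t ht ↦ (hQ t ht.1).continuousWithinAt.mono Icc_subset_Ici_self)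
      (fun t ht ↦ hode t ht.1 ▸ (hQ t ht.1).mono (Ici_subset_Ici.2 ht.1))
      h0.nonneg T (right_mem_Icc.2 hT)
end
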